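/- Let 2 < p < 6, 2 < q < 4 and μ > 0. If u and v are both nonnegative ground states of F_{p,q} at mass μ, then u = v. -/

import Mathlib

open MeasureTheory Real Set

noncomputable section

/-- `u ∈ H¹(ℝ)` with weak derivative `u'`: `u` is continuous, square-integrable,
`u'` is square-integrable, and `u(b) − u(a) = ∫_a^b u'(t) dt` for all `a ≤ b`. -/
def IsH1 (u u' : ℝ → ℝ) : Prop :=
  Continuous u ∧ Integrable (fun x => (u x) ^ 2) ∧ Integrable (fun x => (u' x) ^ 2) ∧
    ∀ a b : ℝ, a ≤ b → u b - u a = ∫ t in a..b, u' t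

/-- The mass `‖u‖₂² = ∫_ℝ u(x)² dx`. -/
def mass (u : ℝ → ℝ) : ℝ := ∫ x, (u x) ^ 2

/-- `D_q(u) = (1/2)∫ u'² − (1/q)|u(0)|^q`. -/
def Dfun (q : ℝ) (u u' : ℝ → ℝ) : ℝ :=
  (1 / 2) * (∫ x, (u' x) ^ 2) - (1 / q) * |u 0| ^ q

/-- `F_{p,q}(u) = (1/2)∫ u'² − (1/p)∫ |u|^p − (1/q)|u(0)|^q`. -/
def Ffun (p q : ℝ) (u u' : ℝ → ℝ) : ℝ :=
  (1 / 2) * (∫ x, (u' x) ^ 2) - (1 / p) * (∫ x, |u x| ^ p) - (1 / q) * |u 0| ^ q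


lemma IsH1.const_zero {c : ℝ} {s : Set ℝ} (hs : volume s = ⊤)
    (h : IntegrableOn (fun _ : ℝ => c) s) : c = 0 := by
  rw [integrableOn_const_iff] at h
  rcases h with h | h
  · simpa using h
  · rw [hs] at h; exact absurd h (lt_irrefl _)

lemma IsH1.zero_of_not {u u' : ℝ → ℝ} (h : IsH1 u u') {a b : ℝ} (hab : a ≤ b)
    (hn : ¬ IntervalIntegrable u' volume a b) :
    (∀ x ≤ a, u x = 0) ∧ (∀ x, b ≤ x → u x = 0) := by
  obtain ⟨_, h2, _, h4⟩ := h
  have key : ∀ a' b', a' ≤ a → b ≤ b' → u b' = u a' := by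
    intro a' b' ha hb
    have : ¬ IntervalIntegrable u' volume a' b' := by
      intro hi
      apply hn
      apply hi.mono_set
      rw [uIcc_of_le hab, uIcc_of_le (ha.trans (hab.trans hb))]
      exact Icc_subset_Icc ha hb
    have h5 := h4 a' b' (ha.trans (hab.trans hb))
    rw [intervalIntegral.integral_undef this] at h5
    linarith
  have hb0 : (u b) ^ 2 = 0 := by
    apply IsH1.const_zero (s := Iic a) (by simp)
    refine (h2.integrableOn (s := Iic a)).congr_fun ?_ measurableSet_Iic
    intro x hx
    simp only
    rw [key x b hx le_rfl]
  have hb : u b = 0 := by simpa using hb0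
  have ha : ∀ x ≤ a, u x = 0 := fun x hx => by rw [← key x b hx le_rfl, hb]
  exact ⟨ha, fun x hx => by rw [key a x le_rfl hx, ha a le_rfl]⟩

lemma IsH1.intervalIntegrable {u u' : ℝ → ℝ} (h : IsH1 u u') (hm : 0 < mass u) (a b : ℝ) :
    IntervalIntegrable u' volume a b := by
  wlog hab : a ≤ b generalizing a b
  · exact (this b a (by linarith)).symm
  by_contra hn
  have : ∀ c, u c = 0 := by
    intro c
    rcases le_total c a with hc | hc
    · exact (h.zero_of_not hab hn).1 c hc
    rcases le_total b c with hc' | hc'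
    · exact (h.zero_of_not hab hn).2 c hc'
    by_cases h1 : IntervalIntegrable u' volume a c
    · by_cases h2 : IntervalIntegrable u' volume c b
      · exact absurd (h1.trans h2) hn
      · exact (h.zero_of_not hc' h2).1 c le_rfl
    · exact (h.zero_of_not hc h1).2 c le_rfl
  simp [mass, this] at hm

lemma IsH1.sub_eq {u u' : ℝ → ℝ} (h : IsH1 u u') (a b : ℝ) :
    u b - u a = ∫ t in a..b, u' t := by
  rcases le_total a b with hab | hab
  · exact h.2.2.2 a b hab
  · rw [intervalIntegral.integral_symm, ← h.2.2.2 b a hab]; ring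

lemma IsH1.aesm {u u' : ℝ → ℝ} (h : IsH1 u u') (hm : 0 < mass u) :
    AEStronglyMeasurable u' volume := by
  have : LocallyIntegrable u' volume := by
    rw [locallyIntegrable_iff]
    intro k hk
    obtain ⟨R, hR⟩ := hk.isBounded.subset_closedBall 0
    rw [Real.closedBall_eq_Icc] at hR
    refine IntegrableOn.mono_set ?_ hR
    by_cases hRR : (0 - R) ≤ 0 + R
    · exact (intervalIntegrable_iff_integrableOn_Icc_of_le hRR).1 (h.intervalIntegrable hm _ _)
    · rw [Icc_eq_empty hRR]; exact integrableOn_empty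
  exact this.aestronglyMeasurable

lemma IsH1.bounded {u u' : ℝ → ℝ} (h : IsH1 u u') (hm : 0 < mass u) :
    ∃ M, ∀ x, |u x| ≤ M := by
  have hloc := h.intervalIntegrable hm
  set K := ∫ x, (u' x) ^ 2 with hK
  have h1 : ∀ x y, x ≤ y → y ≤ x + 1 → |u y - u x| ≤ 1 + K := by
    intro x y hxy hyx
    rw [h.2.2.2 x y hxy]
    have hi : IntegrableOn (fun t => (1:ℝ) + (u' t) ^ 2) (Ioc x y) :=
      (integrableOn_const (by simp) (by simp)).add h.2.2.1.integrableOn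
    calc |∫ t in x..y, u' t| ≤ ∫ t in x..y, |u' t| := by
            simpa using intervalIntegral.norm_integral_le_integral_norm (f := u') (μ := volume) hxy
      _ ≤ ∫ t in x..y, (1 + (u' t) ^ 2) := by
            apply intervalIntegral.integral_mono_on hxy (hloc x y).abs
            · rwa [intervalIntegrable_iff_integrableOn_Ioc_of_le hxy]
            · intro t _
              nlinarith [sq_nonneg (|u' t| - 1), sq_abs (u' t), sq_nonneg (|u' t|)]
      _ = (y - x) + ∫ t in x..y, (u' t) ^ 2 := by
            rw [intervalIntegral.integral_add]
            · simp
            · simp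
            · rw [intervalIntegrable_iff_integrableOn_Ioc_of_le hxy]; exact h.2.2.1.integrableOn
      _ ≤ 1 + K := by
            have : ∫ t in x..y, (u' t) ^ 2 ≤ K := by
              rw [intervalIntegral.integral_of_le hxy]
              exact setIntegral_le_integral h.2.2.1 (Filter.Eventually.of_forall fun t => sq_nonneg _)
            linarith
  have hsq : ∀ x, (u x) ^ 2 ≤ 2 * mass u + 2 * (1 + K) ^ 2 := by
    intro x
    have h2 : ∫ y in x..(x+1), (u x) ^ 2 ≤ ∫ y in x..(x+1), (2 * (u y) ^ 2 + 2 * (1 + K) ^ 2) := by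
      apply intervalIntegral.integral_mono_on (by linarith) (by simp)
      · apply Continuous.intervalIntegrable
        have := h.1
        fun_prop
      · intro y hy
        have := abs_le.1 (h1 x y hy.1 hy.2)
        have h3 : (u y - u x) ^ 2 ≤ (1 + K) ^ 2 := sq_le_sq' this.1 this.2
        nlinarith [sq_nonneg (2 * u y - u x)]
    have h4 : ∫ y in x..(x+1), (u y) ^ 2 ≤ mass u := by
      rw [intervalIntegral.integral_of_le (by linarith)]
      exact setIntegral_le_integral h.2.1 (Filter.Eventually.of_forall fun t => sq_nonneg _)
    rw [intervalIntegral.integral_add (by apply Continuous.intervalIntegrable; have := h.1; fun_prop) (by simp),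
      intervalIntegral.integral_const_mul] at h2
    simp at h2
    linarith
  refine ⟨Real.sqrt (2 * mass u + 2 * (1 + K) ^ 2), fun x => Real.abs_le_sqrt (hsq x)⟩

lemma IsH1.integrable_rpow {u u' : ℝ → ℝ} (h : IsH1 u u') (hm : 0 < mass u) {p : ℝ} (hp : 2 < p) :
    Integrable (fun x => |u x| ^ p) := by
  obtain ⟨M, hM⟩ := h.bounded hm
  refine (h.2.1.const_mul (M ^ (p - 2))).mono' ?_ ?_
  · apply Continuous.aestronglyMeasurable
    exact h.1.abs.rpow_const (fun x => Or.inr (by linarith))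
  · refine Filter.Eventually.of_forall fun x => ?_
    rw [Real.norm_of_nonneg (by positivity)]
    have : |u x| ^ p = |u x| ^ (p - 2) * (u x) ^ 2 := by
      rw [← sq_abs, ← Real.rpow_natCast, ← Real.rpow_add' (abs_nonneg _) (by norm_num; linarith)]
      norm_num
    rw [this]
    gcongr
    exact hM x

lemma IsH1.scale {u u' : ℝ → ℝ} (h : IsH1 u u') {l : ℝ} (hl : 0 < l) :
    IsH1 (fun x => u (l * x)) (fun x => l * u' (l * x)) := by
  obtain ⟨h1, h2, h3, h4⟩ := h
  refine ⟨by fun_prop, h2.comp_mul_left' hl.ne', ?_, ?_⟩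
  · have := (h3.comp_mul_left' hl.ne').const_mul (l ^ 2)
    refine this.congr (Filter.Eventually.of_forall fun x => ?_)
    simp only; ring
  · intro a b hab
    rw [intervalIntegral.integral_const_mul, intervalIntegral.mul_integral_comp_mul_left]
    exact h4 _ _ (by gcongr)


lemma int_mul {f g : ℝ → ℝ} (hf : AEStronglyMeasurable f volume) (hg : AEStronglyMeasurable g volume)
    (hf2 : Integrable (fun x => (f x) ^ 2)) (hg2 : Integrable (fun x => (g x) ^ 2)) :
    Integrable (fun x => f x * g x) := by
  refine (hf2.add hg2).mono' (hf.mul hg) (Filter.Eventually.of_forall fun x => ?_)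
  simp only [Pi.add_apply, Real.norm_eq_abs, abs_mul]
  nlinarith [sq_nonneg (|f x| - |g x|), sq_abs (f x), sq_abs (g x), sq_nonneg (f x), sq_nonneg (g x)]

lemma int_sq_add {f g : ℝ → ℝ} (hf : AEStronglyMeasurable f volume)
    (hg : AEStronglyMeasurable g volume)
    (hf2 : Integrable (fun x => (f x) ^ 2)) (hg2 : Integrable (fun x => (g x) ^ 2)) (t : ℝ) :
    Integrable (fun x => (f x + t * g x) ^ 2) ∧ ∫ x, (f x + t * g x) ^ 2 =
      (∫ x, (f x) ^ 2) + 2 * t * (∫ x, f x * g x) + t ^ 2 * ∫ x, (g x) ^ 2 := by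
  have h := int_mul hf hg hf2 hg2
  have e : (fun x => (f x + t * g x) ^ 2) =
      fun x => ((f x) ^ 2 + (2 * t) * (f x * g x)) + t ^ 2 * (g x) ^ 2 := by
    funext x; ring
  constructor
  · rw [e]; exact (hf2.add (h.const_mul _)).add (hg2.const_mul _)
  · have i1 : Integrable (fun x => (f x) ^ 2 + (2 * t) * (f x * g x)) := hf2.add (h.const_mul _)
    rw [e, integral_add i1 (hg2.const_mul _),
      integral_add hf2 (h.const_mul _), integral_const_mul, integral_const_mul]

lemma IsH1.add_mul {u u' f f' : ℝ → ℝ} (hu : IsH1 u u') (hm : 0 < mass u)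
    (hf : IsH1 f f') (hm' : 0 < mass f) (t : ℝ) :
    IsH1 (fun x => u x + t * f x) (fun x => u' x + t * f' x) := by
  refine ⟨by have := hu.1; have := hf.1; fun_prop, ?_, ?_, ?_⟩
  · exact (int_sq_add hu.1.aestronglyMeasurable hf.1.aestronglyMeasurable hu.2.1 hf.2.1 t).1
  · exact (int_sq_add (hu.aesm hm) (hf.aesm hm') hu.2.2.1 hf.2.2.1 t).1
  · intro a b hab
    rw [intervalIntegral.integral_add (hu.intervalIntegrable hm a b)
      ((hf.intervalIntegrable hm' a b).const_mul t), intervalIntegral.integral_const_mul,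
      ← hu.2.2.2 a b hab, ← hf.2.2.2 a b hab]
    ring

lemma rpow_tangent {p x y : ℝ} (hp : 2 < p) (hx : 0 ≤ x) :
    x ^ p + p * x ^ (p - 1) * (y - x) ≤ |y| ^ p := by
  rcases hx.eq_or_lt with rfl | hx
  · rw [Real.zero_rpow (by linarith), Real.zero_rpow (by linarith)]
    simp
    positivity
  have e : x ^ p = x ^ (p - 1) * x := by
    rw [← Real.rpow_add_one hx.ne']; norm_num
  have h0 : 0 < x ^ (p - 1) := by positivity
  by_cases hy : 0 ≤ y
  · have h1 := one_add_mul_self_le_rpow_one_add (s := y / x - 1) (p := p)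
      (by have : 0 ≤ y / x := by positivity
          linarith) (by linarith)
    have h2 : (1 + (y / x - 1)) = y / x := by ring
    rw [h2, Real.div_rpow hy hx.le, le_div_iff₀ (by positivity)] at h1
    rw [abs_of_nonneg hy]
    refine le_trans (le_of_eq ?_) h1
    rw [e]
    field_simp
  · push Not at hy
    have : x ^ p + p * x ^ (p - 1) * (y - x) ≤ 0 := by
      rw [e]
      have : x + p * (y - x) ≤ 0 := by nlinarith
      nlinarith
    exact this.trans (by positivity)

/-- Multiplier. -/
def omg (p : ℝ) (u u' : ℝ → ℝ) : ℝ :=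
  ((∫ x, (u' x) ^ 2) + 2 / p * ∫ x, |u x| ^ p) / mass u

lemma euler_lagrange {p q μ : ℝ} (hp : 2 < p) (hq : 2 < q) (hμ : 0 < μ) {u u' : ℝ → ℝ}
    (hu : IsH1 u u') (hupos : ∀ x, 0 ≤ u x) (humass : mass u = μ)
    (hugs : ∀ w w' : ℝ → ℝ, IsH1 w w' → mass w = μ → Ffun p q u u' ≤ Ffun p q w w')
    {f f' : ℝ → ℝ} (hf : IsH1 f f') (hm' : 0 < mass f) :
    (∫ x, u' x * f' x) + omg p u u' * (∫ x, u x * f x) - (∫ x, u x ^ (p - 1) * f x)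
      - u 0 ^ (q - 1) * f 0 = 0 := by
  have hm : 0 < mass u := by rw [humass]; exact hμ
  set K := ∫ x, (u' x) ^ 2 with hK
  set P := ∫ x, |u x| ^ p with hP
  set K1 := ∫ x, u' x * f' x with hK1
  set K2 := ∫ x, (f' x) ^ 2 with hK2
  set M1 := ∫ x, u x * f x with hM1
  set M2 := ∫ x, (f x) ^ 2 with hM2
  set P1 := ∫ x, u x ^ (p - 1) * f x with hP1
  have hmt : ∀ t, mass (fun x => u x + t * f x) = μ + 2 * t * M1 + t ^ 2 * M2 := by
    intro t
    rw [← humass]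
    exact (int_sq_add hu.1.aestronglyMeasurable hf.1.aestronglyMeasurable hu.2.1 hf.2.1 t).2
  have hKt : ∀ t, ∫ x, (u' x + t * f' x) ^ 2 = K + 2 * t * K1 + t ^ 2 * K2 := fun t =>
    (int_sq_add (hu.aesm hm) (hf.aesm hm') hu.2.2.1 hf.2.2.1 t).2
  have hPi : Integrable (fun x => |u x| ^ p) := hu.integrable_rpow hm hp
  have hP1i : Integrable (fun x => u x ^ (p - 1) * f x) := by
    obtain ⟨M, hM⟩ := hu.bounded hm
    have hM0 : 0 ≤ M := (abs_nonneg _).trans (hM 0)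
    refine ((int_mul hu.1.aestronglyMeasurable hf.1.aestronglyMeasurable hu.2.1
      hf.2.1).norm.const_mul (M ^ (p - 2))).mono' ?_ (Filter.Eventually.of_forall fun x => ?_)
    · apply Continuous.aestronglyMeasurable
      exact (hu.1.rpow_const (fun x => Or.inr (by linarith))).mul hf.1
    · have e : u x ^ (p - 1) = u x ^ (p - 2) * u x := by
        have h1 := hupos x
        conv_rhs => rw [← Real.rpow_one (u x)]
        rw [Real.rpow_one, ← Real.rpow_add_one' h1 (by linarith)]
        congr 1; ring
      simp only [norm_mul, Real.norm_eq_abs]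
      rw [e, abs_mul, mul_assoc, abs_of_nonneg (Real.rpow_nonneg (hupos x) _)]
      gcongr
      · exact hupos x
      · exact (le_abs_self _).trans (hM x)
  have hPt : ∀ t, 0 < mass (fun x => u x + t * f x) →
      P + p * t * P1 ≤ ∫ x, |u x + t * f x| ^ p := by
    intro t ht
    rw [hP, hP1, ← integral_const_mul, ← integral_add hPi (hP1i.const_mul _)]
    apply integral_mono (hPi.add (hP1i.const_mul _)) ((hu.add_mul hm hf hm' t).integrable_rpow ht hp)
    intro x
    have := rpow_tangent (p := p) (x := u x) (y := u x + t * f x) hp (hupos x)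
    simp only [Pi.add_apply, abs_of_nonneg (hupos x)]
    refine le_trans (le_of_eq ?_) this
    ring
  set L : ℝ → ℝ := fun t => (μ + 2 * t * M1 + t ^ 2 * M2) / μ with hL
  set G : ℝ → ℝ := fun t => L t / 2 * (K + 2 * t * K1 + t ^ 2 * K2)
    - (1 / p) * ((P + p * t * P1) / L t) - (1 / q) * (u 0 ^ q + q * u 0 ^ (q - 1) * (t * f 0)) with hG
  have hL0 : L 0 = 1 := by simp [hL, hμ.ne']
  have hLd : HasDerivAt L (2 * M1 / μ) 0 := by
    have h1 : HasDerivAt (fun t : ℝ => t) 1 0 := hasDerivAt_id 0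
    have := ((((h1.const_mul 2).mul_const M1).const_add μ).add ((h1.pow 2).mul_const M2)).div_const μ
    exact this.congr_deriv (by simp)
  have hGd : HasDerivAt G (M1 / μ * K + K1 + 2 / p * (M1 / μ) * P - P1 - u 0 ^ (q - 1) * f 0) 0 := by
    have h1 : HasDerivAt (fun t : ℝ => t) 1 0 := hasDerivAt_id 0
    have hA := ((((h1.const_mul 2).mul_const K1).const_add K).add ((h1.pow 2).mul_const K2))
    have hB := ((h1.const_mul p).mul_const P1).const_add P
    have hC := (((h1.mul_const (f 0)).const_mul (q * u 0 ^ (q - 1))).const_add (u 0 ^ q)).const_mul (1 / q)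
    have := (((hLd.div_const 2).mul hA).sub ((hB.div hLd (by rw [hL0]; norm_num)).const_mul (1 / p))).sub hC
    refine this.congr_deriv ?_
    simp [hL0]
    field_simp
    ring
  have hGF : G 0 = Ffun p q u u' := by
    simp only [hG, Ffun, hL0, abs_of_nonneg (hupos 0)]
    rw [← hK, ← hP]; ring
  have hmin : IsLocalMin G 0 := by
    have hev : ∀ᶠ t in nhds (0:ℝ), 0 < L t := by
      apply hLd.continuousAt.eventually (lt_mem_nhds _)
      rw [hL0]; norm_num
    filter_upwards [hev] with t ht
    have hmp : 0 < mass (fun x => u x + t * f x) := by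
      rw [hmt]
      have := mul_pos ht hμ
      simpa [hL, hμ.ne'] using this
    rw [hGF]
    have hw := (hu.add_mul hm hf hm' t).scale ht
    refine (hugs _ _ hw ?_).trans ?_
    · have : mass (fun x => u (L t * x) + t * f (L t * x)) = (L t)⁻¹ * mass (fun x => u x + t * f x) := by
        unfold mass
        have := Measure.integral_comp_mul_left (fun x => (u x + t * f x) ^ 2) (L t)
        rw [this, abs_of_pos (by positivity)]; rfl
      rw [this, hmt]
      have h3 : μ + 2 * t * M1 + t ^ 2 * M2 = L t * μ := by simp [hL, hμ.ne']
      rw [h3]; field_simp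
    · have e1 : ∫ x, (L t * (u' (L t * x) + t * f' (L t * x))) ^ 2 = L t * (K + 2 * t * K1 + t ^ 2 * K2) := by
        have := Measure.integral_comp_mul_left (fun x => (L t) ^ 2 * (u' x + t * f' x) ^ 2) (L t)
        simp only [mul_pow]
        rw [this, abs_of_pos (by positivity), integral_const_mul, hKt, smul_eq_mul]
        field_simp
      have e2 : ∫ x, |u (L t * x) + t * f (L t * x)| ^ p = (∫ x, |u x + t * f x| ^ p) / L t := by
        have := Measure.integral_comp_mul_left (fun x => |u x + t * f x| ^ p) (L t)
        rw [this, abs_of_pos (by positivity), smul_eq_mul]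
        field_simp
      simp only [Ffun, e1, e2, hG, mul_zero]
      have h3 := rpow_tangent (p := q) (x := u 0) (y := u 0 + t * f 0) hq (hupos 0)
      have h4 := hPt t hmp
      have h5 : (1 / p) * ((P + p * t * P1) / L t) ≤ (1 / p) * ((∫ x, |u x + t * f x| ^ p) / L t) := by
        gcongr
      have h6 : (1 / q) * (u 0 ^ q + q * u 0 ^ (q - 1) * (t * f 0)) ≤ (1 / q) * |u 0 + t * f 0| ^ q := by
        gcongr
        refine le_trans (le_of_eq ?_) h3
        ring
      linarith
  have := hmin.hasDerivAt_eq_zero hGd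
  unfold omg
  rw [humass, ← hK, ← hP]
  refine Eq.trans ?_ this
  field_simp
  ring


def tent (b h x : ℝ) : ℝ := max 0 (h - |x - b|)

def tent' (b h x : ℝ) : ℝ :=
  (Ioc (b - h) b).indicator (fun _ => (1:ℝ)) x - (Ioc b (b + h)).indicator (fun _ => (1:ℝ)) x

lemma tent_cont (b h : ℝ) : Continuous (tent b h) := by unfold tent; fun_prop

lemma tent_zero {b h x : ℝ} (hx : x ∉ Ioc (b - h) (b + h)) : tent b h x = 0 := by
  unfold tent
  apply max_eq_left
  by_contra hc
  push Not at hc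
  apply hx
  have := abs_lt.1 (show |x - b| < h by linarith)
  constructor <;> linarith

lemma int_ind (m n : ℝ) : Integrable ((Ioc m n).indicator (fun _ => (1:ℝ))) := by
  rw [integrable_indicator_iff measurableSet_Ioc]
  exact integrableOn_const (by simp) (by simp)

lemma integral_ind {m n a c : ℝ} (hmn : m ≤ n) (hac : a ≤ c) :
    ∫ t in a..c, (Ioc m n).indicator (fun _ => (1:ℝ)) t =
      min n (max m c) - min n (max m a) := by
  rw [intervalIntegral.integral_of_le hac, setIntegral_indicator measurableSet_Ioc, Ioc_inter_Ioc]
  simp only [integral_const, smul_eq_mul, mul_one, measureReal_restrict_apply_univ, Real.volume_real_Ioc]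
  grind

lemma tent_isH1 {b h : ℝ} (hh : 0 < h) : IsH1 (tent b h) (tent' b h) := by
  refine ⟨tent_cont b h, ?_, ?_, ?_⟩
  · apply Continuous.integrable_of_hasCompactSupport ((tent_cont b h).pow 2)
    apply HasCompactSupport.intro (isCompact_Icc (a := b - h) (b := b + h))
    intro x hx
    rw [Pi.pow_apply, tent_zero (fun hc => hx (Ioc_subset_Icc_self hc))]; norm_num
  · have : (fun x => (tent' b h x) ^ 2) = fun x => (Ioc (b - h) b).indicator (fun _ => (1:ℝ)) x
        + (Ioc b (b + h)).indicator (fun _ => (1:ℝ)) x := by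
      funext x
      unfold tent'
      by_cases h1 : x ∈ Ioc (b - h) b <;> by_cases h2 : x ∈ Ioc b (b + h) <;> simp [h1, h2]
      exact absurd h1.2 (not_le.2 h2.1)
    rw [this]
    exact (int_ind _ _).add (int_ind _ _)
  · intro a c hac
    unfold tent'
    rw [intervalIntegral.integral_sub (int_ind _ _).intervalIntegrable
      (int_ind _ _).intervalIntegrable, integral_ind (by linarith) hac,
      integral_ind (by linarith) hac]
    have : ∀ x, tent b h x = min b (max (b - h) x) - min (b + h) (max b x) + h := by
      intro x; unfold tent
      rcases le_total x b with h1 | h1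
      · rw [abs_of_nonpos (by linarith), max_eq_left h1, min_eq_right (by linarith : b ≤ b + h)]
        rcases le_total x (b - h) with h2 | h2
        · rw [max_eq_left (by linarith), max_eq_left h2, min_eq_right (by linarith)]; ring
        · rw [max_eq_right (by linarith), max_eq_right h2, min_eq_right h1]; ring
      · rw [abs_of_nonneg (by linarith), max_eq_right h1, max_eq_right (by linarith : b - h ≤ x),
          min_eq_left h1]
        rcases le_total x (b + h) with h2 | h2
        · rw [max_eq_right (by linarith), min_eq_right h2]; ring
        · rw [max_eq_left (by linarith), min_eq_left h2]; ring
    rw [this, this]; ring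

lemma tent_mass {b h : ℝ} (hh : 0 < h) : 0 < mass (tent b h) := by
  unfold mass
  apply integral_pos_of_integrable_nonneg_nonzero (x := b) ((tent_cont b h).pow 2)
    (tent_isH1 hh).2.1
  · intro x; exact sq_nonneg (tent b h x)
  · simp [tent, hh.le, hh.ne']

lemma int_tent' {b h : ℝ} (hh : 0 < h) {u u' : ℝ → ℝ} (hu : IsH1 u u') (hm : 0 < mass u) :
    ∫ x, u' x * tent' b h x = 2 * u b - u (b - h) - u (b + h) := by
  have e : (fun x => u' x * tent' b h x) =
      fun x => (Ioc (b - h) b).indicator u' x - (Ioc b (b + h)).indicator u' x := by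
    funext x
    unfold tent'
    by_cases h1 : x ∈ Ioc (b - h) b <;> by_cases h2 : x ∈ Ioc b (b + h) <;> simp [h1, h2]
  have i : ∀ m n, m ≤ n → Integrable ((Ioc m n).indicator u') := by
    intro m n hmn
    rw [integrable_indicator_iff measurableSet_Ioc]
    exact (intervalIntegrable_iff_integrableOn_Ioc_of_le hmn).1 (hu.intervalIntegrable hm m n)
  rw [e, integral_sub (i _ _ (by linarith)) (i _ _ (by linarith)),
    integral_indicator measurableSet_Ioc, integral_indicator measurableSet_Ioc,
    ← intervalIntegral.integral_of_le (by linarith), ← intervalIntegral.integral_of_le (by linarith),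
    ← hu.sub_eq, ← hu.sub_eq]
  ring

lemma int_tent {b h : ℝ} (hh : 0 < h) {g G H : ℝ → ℝ} (hg : Continuous g)
    (hG : ∀ x, HasDerivAt G (g x) x) (hH : ∀ x, HasDerivAt H (G x) x) :
    ∫ x, g x * tent b h x = H (b + h) + H (b - h) - 2 * H b := by
  have hc : Continuous (fun x => g x * tent b h x) := hg.mul (tent_cont b h)
  rw [← setIntegral_eq_integral_of_forall_compl_eq_zero (s := Ioc (b - h) (b + h))
    (fun x hx => by rw [tent_zero hx, mul_zero]), ← intervalIntegral.integral_of_le (by linarith),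
    ← intervalIntegral.integral_add_adjacent_intervals (b := b)
      (hc.intervalIntegrable _ _) (hc.intervalIntegrable _ _)]
  have e1 : ∫ x in (b - h)..b, g x * tent b h x =
      (fun x => (x - (b - h)) * G x - H x) b - (fun x => (x - (b - h)) * G x - H x) (b - h) := by
    refine intervalIntegral.integral_eq_sub_of_hasDerivAt
      (f := fun x => (x - (b - h)) * G x - H x) ?_ (hc.intervalIntegrable _ _)
    intro x hx
    rw [uIcc_of_le (by linarith)] at hx
    have := ((((hasDerivAt_id x).sub_const (b - h)).mul (hG x)).sub (hH x))
    refine this.congr_deriv ?_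
    have : tent b h x = x - (b - h) := by
      unfold tent
      rw [abs_of_nonpos (by linarith [hx.2]), max_eq_right (by linarith [hx.1])]; ring
    rw [this]; simp; ring
  have e2 : ∫ x in b..(b + h), g x * tent b h x =
      (fun x => (b + h - x) * G x + H x) (b + h) - (fun x => (b + h - x) * G x + H x) b := by
    refine intervalIntegral.integral_eq_sub_of_hasDerivAt
      (f := fun x => (b + h - x) * G x + H x) ?_ (hc.intervalIntegrable _ _)
    intro x hx
    rw [uIcc_of_le (by linarith)] at hx
    have := ((((hasDerivAt_id x).const_sub (b + h)).mul (hG x)).add (hH x))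
    refine this.congr_deriv ?_
    have : tent b h x = b + h - x := by
      unfold tent
      rw [abs_of_nonneg (by linarith [hx.1]), max_eq_right (by linarith [hx.2])]; ring
    rw [this]; simp; ring
  rw [e1, e2]
  simp
  ring

lemma affine_of_mid {f : ℝ → ℝ} (hf : Continuous f)
    (h : ∀ b h, 0 < h → 2 * f b = f (b - h) + f (b + h)) : ∃ α β, ∀ x, f x = α + β * x := by
  have hm : ∀ x y, f (midpoint ℝ x y) = midpoint ℝ (f x) (f y) := by
    intro x y
    wlog hxy : x < y generalizing x y
    · rcases (not_lt.1 hxy).eq_or_lt with rfl | hlt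
      · simp
      · rw [midpoint_comm, this y x hlt, midpoint_comm]
    have := h ((x + y) / 2) ((y - x) / 2) (by linarith)
    rw [midpoint_eq_smul_add, midpoint_eq_smul_add]
    have e1 : (x + y) / 2 - (y - x) / 2 = x := by ring
    have e2 : (x + y) / 2 + (y - x) / 2 = y := by ring
    rw [e1, e2] at this
    have e3 : (⅟2 : ℝ) • (x + y) = (x + y) / 2 := by simp; ring
    rw [e3]
    simp
    linarith
  let A := AffineMap.ofMapMidpoint f hm hf
  refine ⟨f 0, A.linear 1, fun x => ?_⟩
  have h1 : A x = A.linear x + A 0 := by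
    have := A.map_vadd 0 x
    simpa using this
  have h2 : A.linear x = A.linear 1 * x := by
    have := A.linear.map_smul x 1
    simp only [smul_eq_mul, mul_one] at this
    rw [this]; ring
  have h3 : ∀ y, A y = f y := fun y => rfl
  rw [← h3, ← h3, h1, h2]; ring

lemma formula {p q μ : ℝ} (hp : 2 < p) (hq : 2 < q) (hμ : 0 < μ) {u u' : ℝ → ℝ}
    (hu : IsH1 u u') (hupos : ∀ x, 0 ≤ u x) (humass : mass u = μ)
    (hugs : ∀ w w' : ℝ → ℝ, IsH1 w w' → mass w = μ → Ffun p q u u' ≤ Ffun p q w w') :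
    ∃ (β : ℝ) (G H : ℝ → ℝ), G 0 = 0 ∧
      (∀ x, HasDerivAt G (u x ^ (p - 1) - omg p u u' * u x) x) ∧ (∀ x, HasDerivAt H (G x) x) ∧
      ∀ x, u x = u 0 + β * x - H x - u 0 ^ (q - 1) / 2 * |x| := by
  have hm : 0 < mass u := by rw [humass]; exact hμ
  set g : ℝ → ℝ := fun x => u x ^ (p - 1) - omg p u u' * u x with hg
  have hpc : Continuous (fun x => u x ^ (p - 1)) :=
    hu.1.rpow_const (fun x => Or.inr (by linarith))
  have hgc : Continuous g := hpc.sub (continuous_const.mul hu.1)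
  set G : ℝ → ℝ := fun x => ∫ t in (0:ℝ)..x, g t with hG
  have hGd : ∀ x, HasDerivAt G (g x) x := fun x =>
    intervalIntegral.integral_hasDerivAt_right (hgc.intervalIntegrable _ _)
      (hgc.stronglyMeasurableAtFilter _ _) hgc.continuousAt
  have hGc : Continuous G := continuous_iff_continuousAt.2 fun x => (hGd x).continuousAt
  set H : ℝ → ℝ := fun x => ∫ t in (0:ℝ)..x, G t with hH
  have hHd : ∀ x, HasDerivAt H (G x) x := fun x =>
    intervalIntegral.integral_hasDerivAt_right (hGc.intervalIntegrable _ _)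
      (hGc.stronglyMeasurableAtFilter _ _) hGc.continuousAt
  have hHc : Continuous H := continuous_iff_continuousAt.2 fun x => (hHd x).continuousAt
  obtain ⟨α, β, hf⟩ := affine_of_mid (f := fun x => u x + H x + u 0 ^ (q - 1) / 2 * |x|)
    (by have := hu.1; fun_prop) (by
      intro b h hh
      have h1 := euler_lagrange hp hq hμ hu hupos humass hugs (tent_isH1 (b := b) hh) (tent_mass hh)
      have h2 := int_tent (b := b) hh hgc hGd hHd
      have cs : HasCompactSupport (tent b h) := by
        apply HasCompactSupport.intro (isCompact_Icc (a := b - h) (b := b + h))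
        intro x hx
        exact tent_zero (fun hc => hx (Ioc_subset_Icc_self hc))
      have i1 : Integrable (fun x => u x ^ (p - 1) * tent b h x) :=
        (hpc.mul (tent_cont b h)).integrable_of_hasCompactSupport cs.mul_left
      have i2 : Integrable (fun x => u x * tent b h x) :=
        (hu.1.mul (tent_cont b h)).integrable_of_hasCompactSupport cs.mul_left
      have e : (fun x => g x * tent b h x) =
          fun x => u x ^ (p - 1) * tent b h x - omg p u u' * (u x * tent b h x) := by
        funext x; simp only [hg]; ring
      rw [e, integral_sub i1 (i2.const_mul _), integral_const_mul] at h2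
      rw [int_tent' hh hu hm] at h1
      have h3 : 2 * |b| - |b - h| - |b + h| = -2 * tent b h 0 := by
        unfold tent; grind
      linear_combination h1 + h2 + u 0 ^ (q - 1) / 2 * h3)
  have hH0 : H 0 = 0 := by simp [hH]
  have hα : α = u 0 := by
    have := hf 0
    simp [hH0] at this
    exact this.symm
  refine ⟨β, G, H, by simp [hG], hGd, hHd, fun x => ?_⟩
  have := hf x
  linarith


lemma rpow_sq_split {x a : ℝ} (hx : 0 ≤ x) (ha : 2 < a) : x ^ a = x ^ (a - 2) * x ^ 2 := by
  rw [← Real.rpow_natCast, ← Real.rpow_add' hx (by norm_num; linarith)]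
  norm_num

lemma first_integral {p ω : ℝ} (hp : 2 < p) {U D : ℝ → ℝ}
    (hU : ∀ x, 0 ≤ x → HasDerivWithinAt U (D x) (Ici 0) x)
    (hD : ∀ x, 0 ≤ x → HasDerivWithinAt D (ω * U x - U x ^ (p - 1)) (Ici 0) x)
    (iU : IntegrableOn (fun x => U x ^ 2) (Ioi 0)) (iD : IntegrableOn (fun x => D x ^ 2) (Ioi 0))
    (iP : IntegrableOn (fun x => U x ^ p) (Ioi 0)) :
    ∀ x, 0 ≤ x → D x ^ 2 = ω * U x ^ 2 - 2 / p * U x ^ p := by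
  set E : ℝ → ℝ := fun x => D x ^ 2 - ω * U x ^ 2 + 2 / p * U x ^ p with hE
  have hEd : ∀ x, 0 ≤ x → HasDerivWithinAt E 0 (Ici 0) x := by
    intro x hx
    have h1 := (((hD x hx).pow 2).sub (((hU x hx).pow 2).const_mul ω)).add
      (((hU x hx).rpow_const (p := p) (Or.inr (by linarith))).const_mul (2 / p))
    refine h1.congr_deriv ?_
    simp
    field_simp
    ring
  have hEc : ∀ x, 0 ≤ x → E x = E 0 := by
    intro x hx
    refine constant_of_has_deriv_right_zero (a := 0) (b := x) ?_ ?_ x ⟨hx, le_rfl⟩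
    · intro y hy
      exact (hEd y hy.1).continuousWithinAt.mono Icc_subset_Ici_self
    · intro y hy
      exact (hEd y hy.1).mono (Ici_subset_Ici.2 hy.1)
  have hE0 : E 0 = 0 := by
    apply IsH1.const_zero (s := Ioi 0) (by simp)
    have : IntegrableOn E (Ioi 0) := (iD.sub (iU.const_mul ω)).add (iP.const_mul (2 / p))
    exact this.congr_fun (fun x hx => hEc x (le_of_lt hx)) measurableSet_Ioi
  intro x hx
  have := hEc x hx
  rw [hE0] at this
  simp only [hE] at this
  linarith

lemma cont_of {U D : ℝ → ℝ}
    (hU : ∀ x, 0 ≤ x → HasDerivWithinAt U (D x) (Ici 0) x) : ContinuousOn U (Ici 0) :=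
  fun x hx => (hU x hx).continuousWithinAt

lemma gron {ω : ℝ} {U D : ℝ → ℝ}
    (hU : ∀ x, 0 ≤ x → HasDerivWithinAt U (D x) (Ici 0) x)
    (hb : ∀ x, 0 ≤ x → |D x| ≤ ω * U x) :
    ∀ x, 0 ≤ x → U 0 * exp (-(ω * x)) ≤ U x ∧ U x ≤ U 0 * exp (ω * x) := by
  have hc := cont_of hU
  have e : ∀ c x : ℝ, HasDerivAt (fun x => exp (c * x)) (exp (c * x) * c) x := by
    intro c x
    have := ((hasDerivAt_id x).const_mul c).exp
    simpa using this
  intro x hx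
  constructor
  · have hm : MonotoneOn (fun x => U x * exp (ω * x)) (Ici 0) := by
      apply monotoneOn_of_hasDerivWithinAt_nonneg (convex_Ici 0)
        (f' := fun x => D x * exp (ω * x) + U x * (exp (ω * x) * ω))
      · exact hc.mul (by fun_prop)
      · intro y hy
        exact ((hU y (interior_subset hy)).mono interior_subset).mul (e ω y).hasDerivWithinAt
      · intro y hy
        have := (abs_le.1 (hb y (interior_subset hy))).1
        have h2 : 0 ≤ (D y + ω * U y) * exp (ω * y) := mul_nonneg (by linarith) (exp_pos _).le
        linarith
    have := hm (a := 0) (b := x) (by simp) hx hx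
    simp only [mul_zero, exp_zero, mul_one] at this
    calc U 0 * exp (-(ω * x)) ≤ (U x * exp (ω * x)) * exp (-(ω * x)) := by gcongr
      _ = U x := by rw [mul_assoc, ← exp_add]; simp
  · have hm : AntitoneOn (fun x => U x * exp ((-ω) * x)) (Ici 0) := by
      apply antitoneOn_of_hasDerivWithinAt_nonpos (convex_Ici 0)
        (f' := fun x => D x * exp ((-ω) * x) + U x * (exp ((-ω) * x) * (-ω)))
      · exact hc.mul (by fun_prop)
      · intro y hy
        exact ((hU y (interior_subset hy)).mono interior_subset).mul (e (-ω) y).hasDerivWithinAt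
      · intro y hy
        have := (abs_le.1 (hb y (interior_subset hy))).2
        have h2 : 0 ≤ (ω * U y - D y) * exp ((-ω) * y) := mul_nonneg (by linarith) (exp_pos _).le
        linarith
    have := hm (a := 0) (b := x) (by simp) hx hx
    simp only [mul_zero, exp_zero, mul_one] at this
    calc U x = (U x * exp ((-ω) * x)) * exp (ω * x) := by rw [mul_assoc, ← exp_add]; simp
      _ ≤ U 0 * exp (ω * x) := by gcongr

lemma abs_bound {p ω : ℝ} (hp : 2 < p) (hω : 0 ≤ ω) {U D : ℝ → ℝ} (hpos : ∀ x, 0 ≤ U x)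
    (hI : ∀ x, 0 ≤ x → D x ^ 2 = ω * U x ^ 2 - 2 / p * U x ^ p) :
    ∀ x, 0 ≤ x → |D x| ≤ √ω * U x := by
  intro x hx
  apply abs_le_of_sq_le_sq _ (mul_nonneg (sqrt_nonneg _) (hpos x))
  rw [mul_pow, Real.sq_sqrt hω, hI x hx]
  have : 0 ≤ 2 / p * U x ^ p := by
    have := Real.rpow_nonneg (hpos x) p
    positivity
  linarith

def Prof (p q s : ℝ) (U : ℝ → ℝ) : Prop :=
  Continuous U ∧ IntegrableOn (fun x => U x ^ 2) (Ioi 0) ∧ U 0 = s ∧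
  ∀ x, 0 ≤ x → 0 < U x ∧ U x ≤ s ∧ HasDerivWithinAt U
    (-(U x * √(2 / p * (s ^ (p - 2) - U x ^ (p - 2)) + s ^ (2 * q - 4) / 4))) (Ici x) x

lemma prof_of {p q ω s : ℝ} (hp : 2 < p) (hω : 0 ≤ ω) (hs : 0 < s) {U D : ℝ → ℝ}
    (hUc : Continuous U) (hpos : ∀ x, 0 ≤ U x)
    (hU : ∀ x, 0 ≤ x → HasDerivWithinAt U (D x) (Ici 0) x)
    (hDc : ContinuousOn D (Ici 0))
    (iU : IntegrableOn (fun x => U x ^ 2) (Ioi 0))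
    (hI : ∀ x, 0 ≤ x → D x ^ 2 = ω * U x ^ 2 - 2 / p * U x ^ p)
    (hU0 : U 0 = s) (hD0 : D 0 = - (s ^ (q - 1) / 2)) : Prof p q s U := by
  have hUp : ∀ x, 0 ≤ x → 0 < U x := by
    intro x hx
    have := (gron hU (abs_bound hp hω hpos hI) x hx).1
    rw [hU0] at this
    exact lt_of_lt_of_le (by positivity) this
  have hω' : ω = 2 / p * s ^ (p - 2) + s ^ (2 * q - 4) / 4 := by
    have h := hI 0 le_rfl
    rw [hU0, hD0, rpow_sq_split hs.le hp] at h
    have e : (s ^ (q - 1)) ^ 2 = s ^ (2 * q - 4) * s ^ 2 := by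
      rw [← Real.rpow_natCast, ← Real.rpow_natCast, ← Real.rpow_mul hs.le, ← Real.rpow_add hs]
      congr 1; push_cast; ring
    have e2 : (-(s ^ (q - 1) / 2)) ^ 2 = s ^ (2 * q - 4) * s ^ 2 / 4 := by rw [← e]; ring
    rw [e2] at h
    have hs2 : s ^ 2 ≠ 0 := by positivity
    apply mul_right_cancel₀ hs2
    linarith
  have hI' : ∀ x, 0 ≤ x → D x ^ 2 =
      U x ^ 2 * (2 / p * (s ^ (p - 2) - U x ^ (p - 2)) + s ^ (2 * q - 4) / 4) := by
    intro x hx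
    rw [hI x hx, rpow_sq_split (hpos x) hp, hω']; ring
  have hanti : ∀ T, (∀ x, 0 < x → x < T → D x < 0) → ∀ x, 0 ≤ x → x ≤ T → U x ≤ s := by
    intro T hT x hx hxT
    have : AntitoneOn U (Icc 0 T) := by
      apply antitoneOn_of_hasDerivWithinAt_nonpos (convex_Icc 0 T) (f' := D) hUc.continuousOn
      · intro y hy
        rw [interior_Icc] at hy ⊢
        exact (hU y hy.1.le).mono (fun z hz => hz.1.le)
      · intro y hy
        rw [interior_Icc] at hy
        exact (hT y hy.1 hy.2).le
    rw [← hU0]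
    exact this ⟨le_rfl, hx.trans hxT⟩ ⟨hx, hxT⟩ hx
  have hσ : 0 < s ^ (q - 1) / 2 := by positivity
  have hneg : ∀ x, 0 ≤ x → D x < 0 := by
    intro x1 hx1
    by_contra hc
    push Not at hc
    have hcpt : IsCompact (Icc 0 x1 ∩ D ⁻¹' (Ici 0)) := by
      have : IsClosed (Icc 0 x1 ∩ D ⁻¹' (Ici 0)) :=
        (hDc.mono Icc_subset_Ici_self).preimage_isClosed_of_isClosed isClosed_Icc isClosed_Ici
      exact isCompact_Icc.of_isClosed_subset this inter_subset_left
    obtain ⟨x0, hx0, hleast⟩ := hcpt.exists_isLeast ⟨x1, ⟨hx1, le_rfl⟩, hc⟩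
    have hx00 : 0 ≤ x0 := hx0.1.1
    have hbef : ∀ x, 0 ≤ x → x < x0 → D x < 0 := by
      intro x hx hxx
      by_contra hcc
      push Not at hcc
      exact absurd (hleast ⟨⟨hx, hxx.le.trans hx0.1.2⟩, hcc⟩) (not_le.2 hxx)
    have hz : D x0 = 0 := by
      have hiv := intermediate_value_Icc hx00 (hDc.mono Icc_subset_Ici_self)
      obtain ⟨z, hz, hDz⟩ := hiv (⟨by rw [hD0]; linarith, hx0.2⟩ : (0:ℝ) ∈ Icc (D 0) (D x0))
      rcases hz.2.eq_or_lt with h | h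
      · rw [← h, hDz]
      · have := hbef z hz.1 h; linarith
    have hUs := hanti x0 (fun x hx hxx => hbef x hx.le hxx) x0 hx00 le_rfl
    have h1 := hI' x0 hx00
    rw [hz] at h1
    have h2 : 0 ≤ s ^ (p - 2) - U x0 ^ (p - 2) :=
      sub_nonneg.2 (Real.rpow_le_rpow (hpos _) hUs (by linarith))
    have h3 := hUp x0 hx00
    have : 0 < U x0 ^ 2 * (2 / p * (s ^ (p - 2) - U x0 ^ (p - 2)) + s ^ (2 * q - 4) / 4) := by
      positivity
    rw [← h1] at this
    norm_num at this
  refine ⟨hUc, iU, hU0, fun x hx => ⟨hUp x hx, hanti x (fun y hy _ => hneg y hy.le) x hx le_rfl, ?_⟩⟩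
  have : -(U x * √(2 / p * (s ^ (p - 2) - U x ^ (p - 2)) + s ^ (2 * q - 4) / 4)) = D x := by
    have h1 : √(D x ^ 2) = -D x := by rw [Real.sqrt_sq_eq_abs, abs_of_neg (hneg x hx)]
    rw [hI' x hx, Real.sqrt_mul (by positivity), Real.sqrt_sq (hpos x)] at h1
    linarith
  rw [this]
  exact (hU x hx).mono (Ici_subset_Ici.2 hx)


lemma IsH1.locallyIntegrable {u u' : ℝ → ℝ} (h : IsH1 u u') (hm : 0 < mass u) :
    LocallyIntegrable u' volume := by
  rw [locallyIntegrable_iff]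
  intro k hk
  obtain ⟨R, hR⟩ := hk.isBounded.subset_closedBall 0
  rw [Real.closedBall_eq_Icc] at hR
  refine IntegrableOn.mono_set ?_ hR
  by_cases hRR : (0 - R) ≤ 0 + R
  · exact (intervalIntegrable_iff_integrableOn_Icc_of_le hRR).1 (h.intervalIntegrable hm _ _)
  · rw [Icc_eq_empty hRR]; exact integrableOn_empty

lemma IsH1.ae_hasDerivAt {u u' : ℝ → ℝ} (h : IsH1 u u') (hm : 0 < mass u) :
    ∀ᵐ x, HasDerivAt u (u' x) x := by
  filter_upwards [_root_.LocallyIntegrable.ae_hasDerivAt_integral (h.locallyIntegrable hm)] with x hx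
  have h1 := (hx 0).const_add (u 0)
  refine h1.congr_of_eventuallyEq (Filter.Eventually.of_forall fun y => ?_)
  simp only
  rw [← h.sub_eq 0 y]; ring

lemma ground_prof {p q μ : ℝ} (hp : 2 < p) (hq : 2 < q) (hμ : 0 < μ) {u u' : ℝ → ℝ}
    (hu : IsH1 u u') (hupos : ∀ x, 0 ≤ u x) (humass : mass u = μ)
    (hugs : ∀ w w' : ℝ → ℝ, IsH1 w w' → mass w = μ → Ffun p q u u' ≤ Ffun p q w w') :
    0 < u 0 ∧ Prof p q (u 0) u ∧ Prof p q (u 0) (fun x => u (-x)) := by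
  have hm : 0 < mass u := by rw [humass]; exact hμ
  obtain ⟨β, G, H, hG0, hG, hH, hf⟩ := formula hp hq hμ hu hupos humass hugs
  set ω := omg p u u' with hωd
  have hω : 0 ≤ ω := by
    rw [hωd]
    unfold omg
    have h1 : 0 ≤ ∫ x, (u' x) ^ 2 := integral_nonneg fun x => sq_nonneg _
    have h2 : 0 ≤ ∫ x, |u x| ^ p := integral_nonneg fun x => by positivity
    positivity
  set σ := u 0 ^ (q - 1) / 2 with hσ
  set DR : ℝ → ℝ := fun x => β - G x - σ with hDR
  set DL : ℝ → ℝ := fun x => - β + G (-x) - σ with hDL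
  have hUR : ∀ x, 0 ≤ x → HasDerivWithinAt u (DR x) (Ici 0) x := by
    intro x hx
    have h1 : HasDerivAt (fun x => u 0 + β * x - H x - σ * x) (DR x) x := by
      have := ((((hasDerivAt_id x).const_mul β).const_add (u 0)).sub (hH x)).sub
        ((hasDerivAt_id x).const_mul σ)
      exact this.congr_deriv (by simp [hDR])
    refine h1.hasDerivWithinAt.congr_of_mem (fun y hy => ?_) hx
    rw [hf y, abs_of_nonneg hy]
  have hneg : ∀ x : ℝ, HasDerivAt (fun x : ℝ => -x) (-1) x := fun x => hasDerivAt_neg x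
  have hUL : ∀ x, 0 ≤ x → HasDerivWithinAt (fun x => u (-x)) (DL x) (Ici 0) x := by
    intro x hx
    have h1 : HasDerivAt (fun x => u 0 + β * (-x) - H (-x) - σ * x) (DL x) x := by
      have := ((((hneg x).const_mul β).const_add (u 0)).sub ((hH (-x)).comp x (hneg x))).sub
        ((hasDerivAt_id x).const_mul σ)
      exact this.congr_deriv (by simp [hDL])
    refine h1.hasDerivWithinAt.congr_of_mem (fun y hy => ?_) hx
    rw [hf (-y), abs_neg, abs_of_nonneg hy]
  have hDRd : ∀ x, HasDerivAt DR (ω * u x - u x ^ (p - 1)) x := by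
    intro x
    exact (((hG x).const_sub β).sub_const σ).congr_deriv (by ring)
  have hDLd : ∀ x, HasDerivAt DL (ω * u (-x) - u (-x) ^ (p - 1)) x := by
    intro x
    exact ((((hG (-x)).comp x (hneg x)).const_add (-β)).sub_const σ).congr_deriv (by ring)
  have hae := hu.ae_hasDerivAt hm
  have iR : IntegrableOn (fun x => DR x ^ 2) (Ioi 0) := by
    refine (hu.2.2.1.integrableOn (s := Ioi 0)).congr ?_
    rw [Filter.EventuallyEq, ae_restrict_iff' measurableSet_Ioi]
    filter_upwards [hae] with x hx hx0
    have h1 : HasDerivAt u (DR x) x := (hUR x (le_of_lt hx0)).hasDerivAt (Ici_mem_nhds hx0)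
    rw [hx.unique h1]
  have iL : IntegrableOn (fun x => DL x ^ 2) (Ioi 0) := by
    refine (hu.2.2.1.comp_neg.integrableOn (s := Ioi 0)).congr ?_
    rw [Filter.EventuallyEq, ae_restrict_iff' measurableSet_Ioi]
    have hae' := (Measure.measurePreserving_neg (volume : Measure ℝ)).quasiMeasurePreserving.ae hae
    filter_upwards [hae'] with x hx hx0
    have h1 : HasDerivAt (fun x => u (-x)) (DL x) x :=
      (hUL x (le_of_lt hx0)).hasDerivAt (Ici_mem_nhds hx0)
    have h2 : HasDerivAt (fun x => u (-x)) (u' (-x) * (-1)) x := hx.comp x (hneg x)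
    rw [← h2.unique h1]; ring
  have iP : Integrable (fun x => u x ^ p) := by
    refine (hu.integrable_rpow hm hp).congr (Filter.Eventually.of_forall fun x => ?_)
    simp only [abs_of_nonneg (hupos x)]
  have hIR := first_integral hp hUR (fun x _ => (hDRd x).hasDerivWithinAt)
    hu.2.1.integrableOn iR iP.integrableOn
  have hIL := first_integral hp hUL (fun x _ => (hDLd x).hasDerivWithinAt)
    hu.2.1.comp_neg.integrableOn iL iP.comp_neg.integrableOn
  have h0 : 0 < u 0 := by
    refine lt_of_le_of_ne (hupos 0) (fun hc => ?_)
    have hR := gron hUR (abs_bound hp hω hupos hIR)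
    have hL := gron hUL (abs_bound hp hω (fun x => hupos (-x)) hIL)
    have hz : ∀ x, u x = 0 := by
      intro x
      apply le_antisymm _ (hupos x)
      rcases le_total 0 x with hx | hx
      · have := (hR x hx).2
        rwa [← hc, zero_mul] at this
      · have := (hL (-x) (by linarith)).2
        simpa [← hc] using this
    simp [mass, hz] at hm
  have hσp : 0 < σ := by positivity
  have hβ : β = 0 := by
    have h1 := hIR 0 le_rfl
    have h2 := hIL 0 le_rfl
    simp only [neg_zero] at h2
    rw [← h1] at h2
    simp only [hDR, hDL, hG0, neg_zero] at h2
    have : β * σ = 0 := by linarith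
    rcases mul_eq_zero.1 this with h | h
    · exact h
    · exact absurd h hσp.ne'
  refine ⟨h0, ?_, ?_⟩
  · exact prof_of hp hω h0 hu.1 hupos hUR (fun x _ => (hDRd x).continuousAt.continuousWithinAt)
      hu.2.1.integrableOn hIR rfl (by simp [hDR, hG0, hβ, hσ])
  · exact prof_of hp hω h0 (hu.1.comp continuous_neg) (fun x => hupos (-x)) hUL
      (fun x _ => (hDLd x).continuousAt.continuousWithinAt)
      hu.2.1.comp_neg.integrableOn hIL (by simp) (by simp [hDL, hG0, hβ, hσ])


lemma prof_unique {p q s : ℝ} (hp : 2 < p) (hs : 0 < s) {U V : ℝ → ℝ}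
    (hU : Prof p q s U) (hV : Prof p q s V) : ∀ x, 0 ≤ x → U x = V x := by
  intro T hT
  obtain ⟨cU, -, U0, hU⟩ := hU
  obtain ⟨cV, -, V0, hV⟩ := hV
  have hcpt : IsCompact (Icc 0 T) := isCompact_Icc
  have hmin : ∀ W : ℝ → ℝ, Continuous W → (∀ x, 0 ≤ x → 0 < W x) →
      ∃ m, 0 < m ∧ ∀ x ∈ Icc 0 T, m ≤ W x := by
    intro W hW hWp
    obtain ⟨x, hx, hm⟩ := hcpt.exists_isMinOn ⟨0, le_rfl, hT⟩ hW.continuousOn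
    exact ⟨W x, hWp x hx.1, fun y hy => hm hy⟩
  obtain ⟨m1, hm1, hm1'⟩ := hmin U cU fun x hx => (hU x hx).1
  obtain ⟨m2, hm2, hm2'⟩ := hmin V cV fun x hx => (hV x hx).1
  set m := min m1 m2
  have hm : 0 < m := lt_min hm1 hm2
  set F : ℝ → ℝ := fun y => -(y * √(2 / p * (s ^ (p - 2) - y ^ (p - 2)) + s ^ (2 * q - 4) / 4))
    with hF
  obtain ⟨K, hK⟩ : ∃ K, LipschitzOnWith K F (Icc m s) := by
    refine ContDiffOn.exists_lipschitzOnWith (n := 1) ?_ one_ne_zero (convex_Icc _ _) isCompact_Icc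
    intro y hy
    apply ContDiffAt.contDiffWithinAt
    have hy0 : 0 < y := hm.trans_le hy.1
    have h1 : ContDiffAt ℝ 1 (fun y : ℝ => y ^ (p - 2)) y :=
      contDiffAt_id.rpow_const_of_ne hy0.ne'
    have h2 : ContDiffAt ℝ 1
        (fun y : ℝ => 2 / p * (s ^ (p - 2) - y ^ (p - 2)) + s ^ (2 * q - 4) / 4) y :=
      (contDiffAt_const.mul (contDiffAt_const.sub h1)).add contDiffAt_const
    refine (contDiffAt_id.mul (h2.sqrt ?_)).neg
    have h3 : 0 ≤ s ^ (p - 2) - y ^ (p - 2) :=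
      sub_nonneg.2 (Real.rpow_le_rpow hy0.le hy.2 (by linarith))
    positivity
  refine ODE_solution_unique_of_mem_Icc_right (v := fun _ => F) (s := fun _ => Icc m s) (a := 0)
    (b := T) (K := K) (fun _ _ => hK) cU.continuousOn (fun t ht => (hU t ht.1).2.2) ?_
    cV.continuousOn (fun t ht => (hV t ht.1).2.2) ?_ (by rw [U0, V0]) ⟨hT, le_rfl⟩
  · intro t ht
    exact ⟨(min_le_left _ _).trans (hm1' t ⟨ht.1, ht.2.le⟩), (hU t ht.1).2.1⟩
  · intro t ht
    exact ⟨(min_le_right _ _).trans (hm2' t ⟨ht.1, ht.2.le⟩), (hV t ht.1).2.1⟩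

def NProf (p A B : ℝ) (Y : ℝ → ℝ) : Prop :=
  Continuous Y ∧ IntegrableOn (fun x => Y x ^ 2) (Ioi 0) ∧ Y 0 = 1 ∧
  ∀ x, 0 ≤ x → 0 < Y x ∧ Y x ≤ 1 ∧ HasDerivWithinAt Y
    (-(Y x * √(A * (1 - Y x ^ (p - 2)) + B))) (Ici x) x

lemma nprof_lt {p A B A' B' : ℝ} (hp : 2 < p) (hA : A' ≤ A) (hA' : 0 ≤ A') (hB : B' < B)
    (hB' : 0 ≤ B') {Y Z : ℝ → ℝ} (hY : NProf p A B Y) (hZ : NProf p A' B' Z) :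
    ∫ x in Ioi 0, Y x ^ 2 < ∫ x in Ioi 0, Z x ^ 2 := by
  obtain ⟨cY, iY, Y0, hY⟩ := hY
  obtain ⟨cZ, iZ, Z0, hZ⟩ := hZ
  have key : ∀ y : ℝ, 0 < y → y ≤ 1 →
      -(y * √(A * (1 - y ^ (p - 2)) + B)) < -(y * √(A' * (1 - y ^ (p - 2)) + B')) := by
    intro y hy hy1
    have h1 : 0 ≤ 1 - y ^ (p - 2) := sub_nonneg.2 (Real.rpow_le_one hy.le hy1 (by linarith))
    apply neg_lt_neg
    apply mul_lt_mul_of_pos_left _ hy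
    apply Real.sqrt_lt_sqrt (by positivity)
    have := mul_le_mul_of_nonneg_right hA h1
    linarith
  have hle : ∀ T, 0 ≤ T → Y T ≤ Z T := by
    intro T hT
    refine image_le_of_deriv_right_lt_deriv_boundary' (a := 0) (b := T) cY.continuousOn
      (fun x hx => (hY x hx.1).2.2) (by rw [Y0, Z0]) cZ.continuousOn
      (fun x hx => (hZ x hx.1).2.2) ?_ ⟨hT, le_rfl⟩
    intro x hx hxe
    rw [← hxe]
    exact key _ (hY x hx.1).1 (hY x hx.1).2.1
  have hsq : ∀ x ∈ Ioi (0:ℝ), Y x ^ 2 ≤ Z x ^ 2 := by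
    intro x hx
    exact pow_le_pow_left₀ (hY x (le_of_lt hx)).1.le (hle x (le_of_lt hx)) 2
  by_contra hc
  push Not at hc
  have heq : ∫ x in Ioi 0, (Z x ^ 2 - Y x ^ 2) = 0 := by
    rw [integral_sub iZ iY]
    have := setIntegral_mono_on iY iZ measurableSet_Ioi hsq
    linarith
  rw [setIntegral_eq_zero_iff_of_nonneg_ae] at heq
  · have he : EqOn (fun x => Z x ^ 2 - Y x ^ 2) 0 (Ioi 0) :=
      Measure.eqOn_open_of_ae_eq heq isOpen_Ioi (by fun_prop) (by exact continuousOn_const)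
    have he' : ∀ x ∈ Ici (0:ℝ), Z x = Y x := by
      intro x hx
      rcases (mem_Ici.1 hx).eq_or_lt with h | h
      · rw [← h, Y0, Z0]
      · have h1 := he h
        simp only [Pi.zero_apply] at h1
        exact (pow_left_inj₀ (hZ x hx).1.le (hY x hx).1.le two_ne_zero).1 (by linarith)
    have hd := (hY 0 le_rfl).2.2.congr_of_mem he' (by simp)
    have hd' := (hZ 0 le_rfl).2.2
    have h2 := (uniqueDiffWithinAt_Ici (0:ℝ)).eq_deriv _ hd hd'
    rw [Y0, Z0] at h2
    exact absurd h2 (key 1 one_pos le_rfl).ne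
  · rw [Filter.EventuallyLE, ae_restrict_iff' measurableSet_Ioi]
    exact Filter.Eventually.of_forall fun x hx => sub_nonneg.2 (hsq x hx)
  · exact iZ.sub iY

lemma prof_norm {p q s : ℝ} (hs : 0 < s) {U : ℝ → ℝ} (hU : Prof p q s U) :
    ∃ Y, NProf p (2 / p * s ^ (p - 6)) (s ^ (2 * q - 8) / 4) Y ∧
      ∫ x in Ioi 0, Y x ^ 2 = ∫ x in Ioi 0, U x ^ 2 := by
  obtain ⟨cU, iU, U0, hU⟩ := hU
  have hs2 : 0 < (s ^ 2)⁻¹ := by positivity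
  refine ⟨fun x => s⁻¹ * U ((s ^ 2)⁻¹ * x), ⟨by fun_prop, ?_, ?_, ?_⟩, ?_⟩
  · have h1 : IntegrableOn (fun x => U ((s ^ 2)⁻¹ * x) ^ 2) (Ioi 0) := by
      have := (integrableOn_Ioi_comp_mul_left_iff (fun x => U x ^ 2) 0 hs2).2 (by simpa using iU)
      exact this
    simp only [mul_pow]
    exact h1.const_mul _
  · simp [U0, hs.ne']
  · intro x hx
    set z := (s ^ 2)⁻¹ * x with hz
    have hz0 : 0 ≤ z := by positivity
    obtain ⟨h1, h2, h3⟩ := hU z hz0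
    refine ⟨by positivity, ?_, ?_⟩
    · rw [inv_mul_le_iff₀ hs]; linarith
    · have hlin : HasDerivWithinAt (fun x : ℝ => (s ^ 2)⁻¹ * x) ((s ^ 2)⁻¹) (Ici x) x := by
        simpa using ((hasDerivAt_id x).const_mul ((s ^ 2)⁻¹)).hasDerivWithinAt
      have hmaps : MapsTo (fun x : ℝ => (s ^ 2)⁻¹ * x) (Ici x) (Ici z) := by
        intro y hy
        exact mul_le_mul_of_nonneg_left hy hs2.le
      have hd := (h3.comp x hlin hmaps).const_mul s⁻¹
      refine hd.congr_deriv ?_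
      have e : 2 / p * s ^ (p - 6) * (1 - (s⁻¹ * U z) ^ (p - 2)) + s ^ (2 * q - 8) / 4 =
          ((s ^ 2)⁻¹) ^ 2 * (2 / p * (s ^ (p - 2) - U z ^ (p - 2)) + s ^ (2 * q - 4) / 4) := by
        have e1 : s ^ (p - 6) = ((s ^ 2)⁻¹) ^ 2 * s ^ (p - 2) := by
          rw [inv_pow, ← pow_mul, ← Real.rpow_natCast, ← Real.rpow_neg hs.le, ← Real.rpow_add hs]
          congr 1; push_cast; ring
        have e2 : s ^ (2 * q - 8) = ((s ^ 2)⁻¹) ^ 2 * s ^ (2 * q - 4) := by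
          rw [inv_pow, ← pow_mul, ← Real.rpow_natCast, ← Real.rpow_neg hs.le, ← Real.rpow_add hs]
          congr 1; push_cast; ring
        have e3 : s ^ (p - 2) * (s⁻¹ * U z) ^ (p - 2) = U z ^ (p - 2) := by
          rw [← Real.mul_rpow hs.le (by positivity), ← mul_assoc, mul_inv_cancel₀ hs.ne', one_mul]
        rw [e1, e2, ← e3]; ring
      rw [e, Real.sqrt_mul (by positivity), Real.sqrt_sq hs2.le]
      ring
  · have := integral_comp_mul_left_Ioi (fun x => U x ^ 2) 0 hs2
    simp only [mul_pow]
    rw [integral_const_mul, this]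
    simp
    field_simp

lemma prof_mass_lt {p q s r : ℝ} (hp : 2 < p) (hp' : p < 6) (hq' : q < 4) (hs : 0 < s) (hsr : s < r)
    {U V : ℝ → ℝ} (hU : Prof p q s U) (hV : Prof p q r V) :
    ∫ x in Ioi 0, U x ^ 2 < ∫ x in Ioi 0, V x ^ 2 := by
  have hr : 0 < r := hs.trans hsr
  obtain ⟨Y, hY, eY⟩ := prof_norm hs hU
  obtain ⟨Z, hZ, eZ⟩ := prof_norm hr hV
  rw [← eY, ← eZ]
  refine nprof_lt hp ?_ (by positivity) ?_ (by positivity) hY hZ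
  · have := Real.rpow_le_rpow_of_nonpos hs hsr.le (by linarith : p - 6 ≤ 0)
    gcongr
  · have := Real.rpow_lt_rpow_of_neg hs hsr (by linarith : 2 * q - 8 < 0)
    linarith

lemma mass_split {u : ℝ → ℝ} (h : Integrable (fun x => u x ^ 2)) :
    mass u = (∫ x in Ioi 0, u x ^ 2) + ∫ x in Ioi 0, u (-x) ^ 2 := by
  have h1 := integral_comp_neg_Ioi 0 (fun x => u x ^ 2)
  rw [h1, neg_zero, add_comm]
  exact (intervalIntegral.integral_Iic_add_Ioi h.integrableOn h.integrableOn).symm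


theorem stmt8 (p q μ : ℝ) (hp : 2 < p) (hp' : p < 6) (hq : 2 < q) (hq' : q < 4)
    (hμ : 0 < μ) (u u' v v' : ℝ → ℝ)
    (hu : IsH1 u u') (hupos : ∀ x, 0 ≤ u x) (humass : mass u = μ)
    (hugs : ∀ w w' : ℝ → ℝ, IsH1 w w' → mass w = μ → Ffun p q u u' ≤ Ffun p q w w')
    (hv : IsH1 v v') (hvpos : ∀ x, 0 ≤ v x) (hvmass : mass v = μ)
    (hvgs : ∀ w w' : ℝ → ℝ, IsH1 w w' → mass w = μ → Ffun p q v v' ≤ Ffun p q w w') :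
    u = v := by
  obtain ⟨hu0, huR, huL⟩ := ground_prof hp hq hμ hu hupos humass hugs
  obtain ⟨hv0, hvR, hvL⟩ := ground_prof hp hq hμ hv hvpos hvmass hvgs
  have hmu := mass_split hu.2.1
  have hmv := mass_split hv.2.1
  have he : u 0 = v 0 := by
    rcases lt_trichotomy (u 0) (v 0) with h | h | h
    · have h1 := prof_mass_lt hp hp' hq' hu0 h huR hvR
      have h2 := prof_mass_lt hp hp' hq' hu0 h huL hvL
      linarith
    · exact h
    · have h1 := prof_mass_lt hp hp' hq' hv0 h hvR huR
      have h2 := prof_mass_lt hp hp' hq' hv0 h hvL huL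
      linarith
  rw [← he] at hvR hvL
  funext x
  rcases le_total 0 x with hx | hx
  · exact prof_unique hp hu0 huR hvR x hx
  · have := prof_unique hp hu0 huL hvL (-x) (by linarith)
    simpa using this
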